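/- Let l be a prime and let A be an abelian group which is l-primary torsion (every element is annihilated by some power of l) and whose l-torsion subgroup A[l] is finite. Then the quotient A/Div(A) of A by its maximal divisible subgroup is a finite group, and it is isomorphic to the l-adic completion of A, i.e., A/Div(A) ≅ lim_n A/l^nA. -/

import Mathlib

/-!
Write `lⁿA` for `multiplesSubgroup A (l ^ n)`. The finite groups `A[l] ∩ lⁿA` decrease with `n`, so
they are constant from some `N` on. By induction on the exponent of `l` killing an element, this
forces `l^N A = l^m A` for all `m ≥ N` (`multiples_le_of_torsion_stable`). Hence `l^N A` is
`l`-divisible; as multiplication by an integer prime to `l` is bijective on `l`-primary groups,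
`l^N A` is divisible, and so it equals `Div(A)`.

Each `A[lⁿ]` is finite by induction on `n`. For `a : A` there is `d ∈ l^N A` with
`l^N a = l^N d`, so `A[l^N]` surjects onto `A / l^N A`, which is therefore finite. Finally the
inverse system `A/lⁿA` is constant from `N` on, so its limit is `A / l^N A`.
-/

/-- A subgroup `D` of an abelian group `A` is divisible if every element of `D` is an
`n`-th multiple of an element of `D`, for every positive integer `n`. -/
def IsDivisibleSubgroup {A : Type*} [AddCommGroup A] (D : AddSubgroup A) : Prop :=
  ∀ d ∈ D, ∀ n : ℕ, 0 < n → ∃ d' ∈ D, n • d' = d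

/-- The maximal divisible subgroup of an abelian group: the supremum of all divisible
subgroups. -/
def maxDivisibleSubgroup (A : Type*) [AddCommGroup A] : AddSubgroup A :=
  sSup {D : AddSubgroup A | IsDivisibleSubgroup D}

/-- The `m`-torsion subgroup `A[m] = {x ∈ A : m • x = 0}` of an abelian group `A`. -/
def torsionBySubgroup (A : Type*) [AddCommGroup A] (m : ℕ) : AddSubgroup A where
  carrier := {x | m • x = 0}
  zero_mem' := smul_zero m
  add_mem' := by
    intro a b ha hb
    simp only [Set.mem_setOf_eq] at *
    rw [smul_add, ha, hb, add_zero]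
  neg_mem' := by
    intro a ha
    simp only [Set.mem_setOf_eq] at *
    rw [smul_neg, ha, neg_zero]

/-- The subgroup `m·A` of `m`-th multiples of an abelian group `A`. -/
def multiplesSubgroup (A : Type*) [AddCommGroup A] (m : ℕ) : AddSubgroup A where
  carrier := {x | ∃ y : A, m • y = x}
  zero_mem' := ⟨0, smul_zero m⟩
  add_mem' := by
    rintro a b ⟨y, rfl⟩ ⟨z, rfl⟩
    exact ⟨y + z, smul_add m y z⟩
  neg_mem' := by
    rintro a ⟨y, rfl⟩
    exact ⟨-y, smul_neg m y⟩

/-- The natural projection `A/l^(n+1)A → A/l^nA`. -/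
def adicTransition (A : Type*) [AddCommGroup A] (l n : ℕ) :
    (A ⧸ multiplesSubgroup A (l ^ (n + 1))) →+ (A ⧸ multiplesSubgroup A (l ^ n)) :=
  QuotientAddGroup.map _ _ (AddMonoidHom.id A) (by
    rintro x ⟨y, rfl⟩
    exact ⟨l • y, by rw [← smul_assoc, smul_eq_mul, ← pow_succ]; rfl⟩)

/-- The `l`-adic completion `lim_n A/l^nA`, realized as the subgroup of compatible
families in `∏ n, A/l^nA`. -/
def adicCompletion (A : Type*) [AddCommGroup A] (l : ℕ) :
    AddSubgroup (∀ n : ℕ, A ⧸ multiplesSubgroup A (l ^ n)) where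
  carrier := {f | ∀ n : ℕ, adicTransition A l n (f (n + 1)) = f n}
  zero_mem' := by intro n; simp
  add_mem' := by
    intro a b ha hb n
    simp only [Pi.add_apply, map_add, ha n, hb n]
  neg_mem' := by
    intro a ha n
    simp only [Pi.neg_apply, map_neg, ha n]

theorem multiples_pow_antitone (A : Type*) [AddCommGroup A] (l : ℕ) {m n : ℕ} (h : m ≤ n) :
    multiplesSubgroup A (l ^ n) ≤ multiplesSubgroup A (l ^ m) := by
  rintro x ⟨y, rfl⟩
  refine ⟨l ^ (n - m) • y, ?_⟩
  rw [smul_smul, ← pow_add, Nat.add_sub_cancel' h]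

/-- A decreasing chain of subsets of the finite group `A[l]` stabilizes. -/
theorem exists_torsion_stable (A : Type*) [AddCommGroup A] (l : ℕ)
    (hfin : Finite (torsionBySubgroup A l)) :
    ∃ N : ℕ, ∀ m : ℕ, N ≤ m → ∀ x : A, l • x = 0 →
      x ∈ multiplesSubgroup A (l ^ N) → x ∈ multiplesSubgroup A (l ^ m) := by
  let f : ℕ →o (Set (torsionBySubgroup A l))ᵒᵈ :=
    ⟨fun n => OrderDual.toDual {x | (x : A) ∈ multiplesSubgroup A (l ^ n)},
      fun m n h x hx => multiples_pow_antitone A l h hx⟩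
  obtain ⟨N, hN⟩ := WellFoundedGT.monotone_chain_condition f
  refine ⟨N, fun m hm x hx hxN => ?_⟩
  have h : {x : torsionBySubgroup A l | (x : A) ∈ multiplesSubgroup A (l ^ N)} =
      {x : torsionBySubgroup A l | (x : A) ∈ multiplesSubgroup A (l ^ m)} := hN m hm
  have h1 : (⟨x, hx⟩ : torsionBySubgroup A l) ∈
      {x : torsionBySubgroup A l | (x : A) ∈ multiplesSubgroup A (l ^ N)} := hxN
  rw [h] at h1
  exact h1

theorem multiples_le_of_torsion_stable {A : Type*} [AddCommGroup A] {l N : ℕ}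
    (hprim : ∀ x : A, ∃ n : ℕ, l ^ n • x = 0)
    (hN : ∀ m : ℕ, N ≤ m → ∀ x : A, l • x = 0 →
      x ∈ multiplesSubgroup A (l ^ N) → x ∈ multiplesSubgroup A (l ^ m))
    (m : ℕ) (hm : N ≤ m) :
    multiplesSubgroup A (l ^ N) ≤ multiplesSubgroup A (l ^ m) := by
  have key : ∀ k : ℕ, ∀ x ∈ multiplesSubgroup A (l ^ N), l ^ k • x = 0 →
      x ∈ multiplesSubgroup A (l ^ m) := by
    intro k
    induction k with
    | zero =>
      intro x _ h
      have hx : x = 0 := by simpa using h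
      exact hx ▸ zero_mem _
    | succ k ih =>
      intro x hx h
      -- `l ^ k • x` lies in `A[l]`, so it is `l ^ k • (l ^ m • z)`; subtract `l ^ m • z` from `x`.
      obtain ⟨z, hz⟩ := hN (k + m) (by omega) (l ^ k • x)
        (by rw [smul_smul, ← pow_succ']; exact h) (nsmul_mem hx _)
      have hzm : l ^ m • z ∈ multiplesSubgroup A (l ^ m) := ⟨z, rfl⟩
      have h1 : x - l ^ m • z ∈ multiplesSubgroup A (l ^ m) := by
        refine ih _ (sub_mem hx (multiples_pow_antitone A l hm hzm)) ?_
        rw [smul_sub, smul_smul, ← pow_add, hz, sub_self]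
      simpa using add_mem h1 hzm
  intro x hx
  obtain ⟨k, hk⟩ := hprim x
  exact key k x hx hk

/-- An `l`-divisible subgroup of an `l`-primary torsion group is divisible. -/
theorem isDivisibleSubgroup_of_pow {A : Type*} [AddCommGroup A] {l : ℕ} (hl : l.Prime)
    (hprim : ∀ x : A, ∃ n : ℕ, l ^ n • x = 0) (D : AddSubgroup A)
    (hD : ∀ d ∈ D, ∀ e : ℕ, ∃ d' ∈ D, l ^ e • d' = d) : IsDivisibleSubgroup D := by
  intro d hd n hn
  obtain ⟨e, m, hm, rfl⟩ := Nat.exists_eq_pow_mul_and_not_dvd hn.ne' l hl.ne_one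
  obtain ⟨d₁, hd₁, rfl⟩ := hD d hd e
  obtain ⟨k, hk⟩ := hprim d₁
  have hc : IsCoprime (m : ℤ) ((l ^ k : ℕ) : ℤ) :=
    Nat.isCoprime_iff_coprime.2 (((Nat.Prime.coprime_iff_not_dvd hl).2 hm).symm.pow_right k)
  obtain ⟨u, v, huv⟩ := hc
  refine ⟨u • d₁, zsmul_mem hd₁ u, ?_⟩
  have h : m • u • d₁ = d₁ := by
    calc m • u • d₁ = (u * (m : ℤ)) • d₁ := by rw [mul_comm, mul_smul, natCast_zsmul]
      _ = (u * (m : ℤ)) • d₁ + v • (((l ^ k : ℕ) : ℤ) • d₁) := by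
        rw [natCast_zsmul, hk, smul_zero, add_zero]
      _ = d₁ := by rw [smul_smul, ← add_smul, huv, one_smul]
  rw [mul_smul, h]

theorem finite_torsion_pow (A : Type*) [AddCommGroup A] (l : ℕ)
    (hfin : Finite (torsionBySubgroup A l)) (n : ℕ) :
    {x : A | l ^ n • x = 0}.Finite := by
  have hl : {x : A | l • x = 0}.Finite := hfin
  induction n with
  | zero => simp
  | succ n ih =>
    -- Multiplication by `l` maps `A[l ^ (n + 1)]` to `A[l ^ n]`, with fibres cosets of `A[l]`.
    refine Set.Finite.of_finite_fibers (fun x : A => l • x) (ih.subset ?_) ?_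
    · rintro _ ⟨x, hx, rfl⟩
      change l ^ n • l • x = 0
      rw [smul_smul, ← pow_succ]
      exact hx
    · rintro _ ⟨x, hx, rfl⟩
      refine (hl.image (fun t => t + x)).subset ?_
      rintro y ⟨_, hy⟩
      have hy' : l • y = l • x := hy
      exact ⟨y - x, by simp [smul_sub, hy'], by simp⟩

/-- The natural map `A → lim_n A/lⁿA`. -/
def toAdicCompletion (A : Type*) [AddCommGroup A] (l : ℕ) : A →+ adicCompletion A l where
  toFun a := ⟨fun n => (a : A ⧸ multiplesSubgroup A (l ^ n)), fun _ => rfl⟩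
  map_zero' := rfl
  map_add' _ _ := rfl

theorem mem_ker_toAdicCompletion (A : Type*) [AddCommGroup A] (l : ℕ) (a : A) :
    a ∈ (toAdicCompletion A l).ker ↔ ∀ n, a ∈ multiplesSubgroup A (l ^ n) := by
  rw [AddMonoidHom.mem_ker, Subtype.ext_iff, funext_iff]
  exact forall_congr' fun n => QuotientAddGroup.eq_zero_iff a

/-- If the chain `lⁿA` is constant from `N` on, a compatible family is determined by its `N`-th
component, so it comes from an element of `A`. -/
theorem toAdicCompletion_surjective {A : Type*} [AddCommGroup A] {l N : ℕ}
    (hN : ∀ m : ℕ, N ≤ m → multiplesSubgroup A (l ^ N) ≤ multiplesSubgroup A (l ^ m)) :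
    Function.Surjective (toAdicCompletion A l) := by
  rintro ⟨f, hf⟩
  have down : ∀ (k n : ℕ) (a : A), (a : A ⧸ multiplesSubgroup A (l ^ (n + k))) = f (n + k) →
      (a : A ⧸ multiplesSubgroup A (l ^ n)) = f n := by
    intro k
    induction k with
    | zero => intro n a h; exact h
    | succ k ih =>
      intro n a h
      refine ih n a ?_
      rw [← hf (n + k)]
      exact congrArg (adicTransition A l (n + k)) h
  obtain ⟨a, ha⟩ := QuotientAddGroup.mk_surjective (f N)
  refine ⟨a, Subtype.ext (funext fun n => ?_)⟩
  change (a : A ⧸ multiplesSubgroup A (l ^ n)) = f n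
  rcases le_total n N with h | h
  · obtain ⟨k, rfl⟩ := Nat.exists_eq_add_of_le h
    exact down k n a ha
  · obtain ⟨k, rfl⟩ := Nat.exists_eq_add_of_le h
    obtain ⟨b, hb⟩ := QuotientAddGroup.mk_surjective (f (N + k))
    have hab := ha.trans (down k N b hb).symm
    rw [← hb]
    exact QuotientAddGroup.eq.2 (hN _ h (QuotientAddGroup.eq.1 hab))

/-- Let `l` be a prime and `A` an abelian group which is `l`-primary torsion and whose
`l`-torsion subgroup `A[l]` is finite. Then `A/Div(A)` is finite and is isomorphic to the
`l`-adic completion `lim_n A/l^nA` of `A`. -/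
theorem quotient_maxDivisible_finite_and_iso_adicCompletion
    (l : ℕ) (hl : l.Prime) (A : Type*) [AddCommGroup A]
    (hprim : ∀ x : A, ∃ n : ℕ, l ^ n • x = 0)
    (hfin : Finite (torsionBySubgroup A l)) :
    Finite (A ⧸ maxDivisibleSubgroup A) ∧
      Nonempty ((A ⧸ maxDivisibleSubgroup A) ≃+ adicCompletion A l) := by
  obtain ⟨N, hN⟩ := exists_torsion_stable A l hfin
  have hle := multiples_le_of_torsion_stable hprim hN
  have hpow : ∀ d ∈ multiplesSubgroup A (l ^ N), ∀ e : ℕ,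
      ∃ d' ∈ multiplesSubgroup A (l ^ N), l ^ e • d' = d := by
    intro d hd e
    obtain ⟨y, hy⟩ := hle (e + N) (by omega) hd
    exact ⟨l ^ N • y, ⟨y, rfl⟩, by rw [smul_smul, ← pow_add, hy]⟩
  have hDiv : maxDivisibleSubgroup A = multiplesSubgroup A (l ^ N) := by
    apply le_antisymm
    · refine sSup_le fun E hE x hx => ?_
      obtain ⟨y, -, hy⟩ := hE x hx (l ^ N) (pow_pos hl.pos N)
      exact ⟨y, hy⟩
    · exact le_sSup (isDivisibleSubgroup_of_pow hl hprim _ hpow)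
  constructor
  · rw [hDiv]
    have : Finite {x : A | l ^ N • x = 0} := finite_torsion_pow A l hfin N
    refine Finite.of_surjective
      (fun x : {x : A | l ^ N • x = 0} => ((x : A) : A ⧸ multiplesSubgroup A (l ^ N))) ?_
    intro q
    obtain ⟨a, rfl⟩ := QuotientAddGroup.mk_surjective q
    obtain ⟨d, hd, hda⟩ := hpow (l ^ N • a) ⟨a, rfl⟩ N
    refine ⟨⟨a - d, ?_⟩, ?_⟩
    · change l ^ N • (a - d) = 0
      rw [smul_sub, hda, sub_self]
    · exact QuotientAddGroup.eq.2 (by simpa using hd)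
  · have hker : maxDivisibleSubgroup A = (toAdicCompletion A l).ker := by
      ext a
      rw [hDiv, mem_ker_toAdicCompletion]
      refine ⟨fun h n => ?_, fun h => h N⟩
      rcases le_total n N with hn | hn
      · exact multiples_pow_antitone A l hn h
      · exact hle n hn h
    exact ⟨(QuotientAddGroup.quotientAddEquivOfEq hker).trans
      (QuotientAddGroup.quotientKerEquivOfSurjective _ (toAdicCompletion_surjective hle))⟩
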